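/- Every functional ARext-structure admits a diff-faithful embedding into a functional ARD-structure: given a functional ARext-structure S = (I, E, A), there exist a functional ARD-structure S' = (I', E', A') and an embedding (f, g, h) : S → S' that is diff-faithful, i.e. whenever IsDiff d a b holds in S, IsDiff (f d) (h a) (h b) holds in S'. -/

import Mathlib

universe u v u₁ v₁ u₂ v₂

/-- A function `a : I → E` has *positive support* if it is `⊥` on all negative indices. -/
def PosSupport {I E : Type*} [LinearOrder I] [Zero I] [Bot E] (a : I → E) : Prop :=
  ∀ i : I, i < 0 → a i = ⊥

/-- The *write* operation on arrays-as-functions: update at `i` if `0 ≤ i`, else do nothing. -/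
def wr {I E : Type*} [LinearOrder I] [Zero I] [Bot E] (a : I → E) (i : I) (e : E) : I → E :=
  if 0 ≤ i then Function.update a i e else a

/-- `IsDiff d a b` : `d` is the maxdiff of `a` and `b`, i.e. either `a = b` and `d = 0`,
or `d` is the greatest index at which `a` and `b` differ. -/
def IsDiff {I E : Type*} [LinearOrder I] [Zero I] [Bot E] (d : I) (a b : I → E) : Prop :=
  (a = b ∧ d = 0) ∨ (a d ≠ b d ∧ ∀ j : I, d < j → a j = b j)

/-- A functional structure for the theory ARext of arrays with extensionality over the index
theory TO of linear orders with `0`: an index sort `I`, an element sort `E` with `⊥`, and a set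
`A` of positive-support arrays containing `ε` and closed under writes. -/
structure FunARext : Type (max (u + 1) (v + 1)) where
  I : Type u
  [linOrdI : LinearOrder I]
  [zeroI : Zero I]
  E : Type v
  [botE : Bot E]
  A : Set (I → E)
  posSupport : ∀ a ∈ A, PosSupport a
  eps_mem : (fun _ : I => (⊥ : E)) ∈ A
  wr_mem : ∀ a ∈ A, ∀ (i : I) (e : E), wr a i e ∈ A

attribute [instance] FunARext.linOrdI FunARext.zeroI FunARext.botE

/-- A functional structure for the theory ARD of arrays with maxdiff: a functional
ARext-structure in which the maxdiff of any two arrays of `A` is defined. -/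
structure FunARD extends FunARext.{u, v} where
  diff_total : ∀ a ∈ A, ∀ b ∈ A, ∃ d : I, IsDiff d a b

/-- An embedding of functional ARext-structures: an order embedding `f` of indexes preserving
`0`, an injective map `g` of elements preserving `⊥`, and a map `h` of arrays mapping `A` into
`A'` and commuting with reads, with `ε`, and with writes. -/
structure ARextEmbedding (S : FunARext.{u₁, v₁}) (T : FunARext.{u₂, v₂}) :
    Type (max u₁ v₁ u₂ v₂) where
  f : S.I ↪o T.I
  map_zero : f 0 = 0
  g : S.E → T.E
  g_injective : Function.Injective g
  map_bot : g ⊥ = ⊥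
  h : (S.I → S.E) → (T.I → T.E)
  h_mem : ∀ a ∈ S.A, h a ∈ T.A
  h_read : ∀ a ∈ S.A, ∀ i : S.I, h a (f i) = g (a i)
  h_eps : h (fun _ : S.I => (⊥ : S.E)) = fun _ : T.I => (⊥ : T.E)
  h_wr : ∀ a ∈ S.A, ∀ (i : S.I) (e : S.E), h (wr a i e) = wr (h a) (f i) (g e)

/-- An embedding is *diff-faithful* if it preserves maxdiffs of arrays of `A`. -/
def ARextEmbedding.DiffFaithful {S : FunARext.{u₁, v₁}} {T : FunARext.{u₂, v₂}}
    (em : ARextEmbedding S T) : Prop :=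
  ∀ a ∈ S.A, ∀ b ∈ S.A, ∀ d : S.I, IsDiff d a b → IsDiff (em.f d) (em.h a) (em.h b)

/-- An embedding of functional ARD-structures: a diff-faithful embedding of the underlying
functional ARext-structures. -/
structure ARDEmbedding (S : FunARD.{u₁, v₁}) (T : FunARD.{u₂, v₂})
    extends ARextEmbedding S.toFunARext T.toFunARext where
  diff_faithful : toARextEmbedding.DiffFaithful

/-!
Let `a` and `b` be arrays without a maxdiff. The indices below some index where they differ form a
lower set without maximum, and the arrays differ cofinally in it. At the end of every such cut we
insert a block of new indices, one copy of each `k : I`, where the extension of an array `a` reads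
`r k`, with `r` a chosen representative of the germ of `a` at the end of the cut. Writes and
differences below the cut do not affect germs, so extending arrays commutes with writes and
preserves maxdiffs.

The new arrays are the extensions of arrays of `A`, modified at finitely many new indices. Arrays
differing cofinally below a cut have distinct germs there, and representatives of distinct germs
differ infinitely often, so finitely many modifications cannot remove all differences on the block.
Each block is ordered so that every nonempty subset has a maximum, which is then the maxdiff.
-/

open Filter

section Array

variable {I J E : Type*} [LinearOrder I] [Zero I] [LinearOrder J] [Zero J] [Bot E]

theorem wr_apply_of_ne (a : I → E) {i j : I} (h : j ≠ i) (e : E) : wr a i e j = a j := by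
  unfold wr
  split_ifs
  · exact Function.update_of_ne h _ _
  · rfl

theorem finite_wr_ne (a : I → E) (i : I) (e : E) : {j | wr a i e j ≠ a j}.Finite :=
  (Set.finite_singleton i).subset fun _ hj => by_contra fun h => hj (wr_apply_of_ne a h e)

theorem wr_comp_orderEmbedding (f : I ↪o J) (hf : f 0 = 0) (x : J → E) (i : I) (e : E) :
    wr x (f i) e ∘ f = wr (x ∘ f) i e := by
  have h_nonneg : 0 ≤ f i ↔ 0 ≤ i := by rw [← hf, f.le_iff_le]
  simp only [wr, h_nonneg]
  split_ifs
  · exact Function.update_comp_eq_of_injective x f.injective i e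
  · rfl

theorem wr_apply_congr {a b : I → E} {j : I} (h : a j = b j) (i : I) (e : E) :
    wr a i e j = wr b i e j := by
  unfold wr
  split_ifs
  · simp only [Function.update_apply, h]
  · exact h

theorem exists_isDiff_of_wellFoundedOn {x y : I → E} {U : Set I} (hU : IsUpperSet U)
    (hne : (U ∩ {p | x p ≠ y p}).Nonempty)
    (hwf : (U ∩ {p | x p ≠ y p}).WellFoundedOn (· > ·)) : ∃ d, IsDiff d x y := by
  obtain ⟨p, hp⟩ := hne
  obtain ⟨⟨d, hdU, hd⟩, -, hmax⟩ := WellFounded.has_min hwf Set.univ ⟨⟨p, hp⟩, trivial⟩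
  exact ⟨d, Or.inr ⟨hd, fun j hj =>
    by_contra fun hne => hmax ⟨j, hU hj.le hdU, hne⟩ trivial hj⟩⟩

theorem exists_isDiff_of_finite_ne {x y x' y' : I → E} (hx : {p | x p ≠ x' p}.Finite)
    (hy : {p | y p ≠ y' p}.Finite) {U : Set I} (hU : IsUpperSet U)
    (hne : (U ∩ {p | x p ≠ y p}).Nonempty)
    (hwf : (U ∩ {p | x' p ≠ y' p}).WellFoundedOn (· > ·)) : ∃ d, IsDiff d x y := by
  refine exists_isDiff_of_wellFoundedOn hU hne
    (((hx.union hy).wellFoundedOn.union hwf).subset ?_)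
  rintro p ⟨hpU, hp⟩
  by_cases hxy : x p = x' p ∧ y p = y' p
  · exact Or.inr ⟨hpU, fun h => hp (hxy.1.trans (h.trans hxy.2.symm))⟩
  · exact Or.inl (not_and_or.1 hxy)

theorem nonempty_inter_ne_of_infinite {α β : Type*} {x y x' y' : α → β}
    (hx : {p | x p ≠ x' p}.Finite) (hy : {p | y p ≠ y' p}.Finite) {U : Set α}
    (h : (U ∩ {p | x' p ≠ y' p}).Infinite) : (U ∩ {p | x p ≠ y p}).Nonempty := by
  obtain ⟨p, ⟨hpU, hp⟩, hp_eq⟩ := (h.sdiff (hx.union hy)).nonempty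
  obtain ⟨hpx, hpy⟩ := not_or.1 hp_eq
  exact ⟨p, hpU, fun hxy => hp ((not_not.1 hpx).symm.trans (hxy.trans (not_not.1 hpy)))⟩

theorem exists_ne_and_nonneg {a b : I → E} (ha : PosSupport a) (hb : PosSupport b) (h : a ≠ b) :
    ∃ i, a i ≠ b i ∧ 0 ≤ i := by
  obtain ⟨i, hi⟩ := Function.ne_iff.1 h
  exact ⟨i, hi, not_lt.1 fun h_neg => hi ((ha i h_neg).trans (hb i h_neg).symm)⟩

end Array

section GermRep

variable {I E : Type*} [Bot E] {l : Filter I} {a b : I → E}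

open Classical in
/-- A representative of the germ of `a` along `l`, depending only on the germ. The germ of the
constant array `⊥` is represented by that array itself, so that extending arrays preserves `ε`. -/
noncomputable def germRep (l : Filter I) (a : I → E) : I → E :=
  if a =ᶠ[l] fun _ => ⊥ then fun _ => ⊥ else Quotient.out (s := germSetoid l E) (a : Germ l E)

theorem germRep_eventuallyEq (l : Filter I) (a : I → E) : germRep l a =ᶠ[l] a := by
  unfold germRep
  split_ifs with h
  · exact h.symm
  · exact Quotient.mk_out (s := germSetoid l E) a

theorem germRep_congr (h : a =ᶠ[l] b) : germRep l a = germRep l b := by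
  classical
  have h_bot : (a =ᶠ[l] fun _ => ⊥) ↔ b =ᶠ[l] fun _ => ⊥ := ⟨h.symm.trans, h.trans⟩
  have h_germ : (a : Germ l E) = b := Germ.coe_eq.2 h
  unfold germRep
  rw [h_germ]
  exact if_congr h_bot rfl rfl

theorem germRep_bot (l : Filter I) : germRep l (fun _ => (⊥ : E)) = fun _ => ⊥ :=
  if_pos (EventuallyEq.refl _ _)

theorem infinite_germRep_ne (hl : l ≤ cofinite) (h : ¬ a =ᶠ[l] b) :
    {k | germRep l a k ≠ germRep l b k}.Infinite := by
  intro h_fin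
  have h_rep : germRep l a =ᶠ[l] germRep l b := (eventually_cofinite.2 h_fin).filter_mono hl
  exact h ((germRep_eventuallyEq l a).symm.trans (h_rep.trans (germRep_eventuallyEq l b)))

end GermRep

/-- A lower set of indices that contains `0` and has no maximum: a place where arrays of positive
support may differ cofinally. -/
structure LimitCut (I : Type*) [LinearOrder I] [Zero I] extends LowerSet I where
  zero_mem : 0 ∈ toLowerSet
  exists_gt : ∀ i ∈ toLowerSet, ∃ j ∈ toLowerSet, i < j

namespace LimitCut

variable {I E : Type*} [LinearOrder I] [Zero I]

theorem toLowerSet_injective : Function.Injective (toLowerSet : LimitCut I → LowerSet I) := by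
  rintro ⟨⟩ ⟨⟩ rfl
  rfl

theorem Iic_ne (c : LimitCut I) (i : I) : LowerSet.Iic i ≠ c.toLowerSet := by
  intro h
  obtain ⟨j, hj, hij⟩ := c.exists_gt i (h ▸ LowerSet.mem_Iic_iff.2 le_rfl)
  exact hij.not_ge (LowerSet.mem_Iic_iff.1 (h ▸ hj))

instance (c : LimitCut I) : Nonempty c.toLowerSet := ⟨⟨0, c.zero_mem⟩⟩

instance (c : LimitCut I) : NoMaxOrder c.toLowerSet where
  exists_gt i := let ⟨j, hj, hij⟩ := c.exists_gt i i.2; ⟨⟨j, hj⟩, hij⟩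

/-- The filter of sets of indices containing a final segment of the cut. Germs along it record the
behaviour of arrays just below the cut. -/
def leftFilter (c : LimitCut I) : Filter I :=
  map ((↑) : c.toLowerSet → I) atTop

theorem leftFilter_le_cofinite (c : LimitCut I) : c.leftFilter ≤ cofinite :=
  Subtype.val_injective.tendsto_cofinite.mono_left atTop_le_cofinite

theorem eventuallyEq_leftFilter_of_forall_gt {c : LimitCut I} {a b : I → E} {d : I}
    (hd : d ∈ c.toLowerSet) (h : ∀ j, d < j → a j = b j) : a =ᶠ[c.leftFilter] b :=
  eventually_map.2 <| (eventually_gt_atTop (⟨d, hd⟩ : c.toLowerSet)).mono fun j hj => h j hj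

/-- The cut approached from below by a set of indices without maximum. -/
def ofCofinal (s : Set I) (h_nonneg : ∃ i ∈ s, 0 ≤ i) (h_gt : ∀ i ∈ s, ∃ j ∈ s, i < j) :
    LimitCut I where
  toLowerSet := lowerClosure s
  zero_mem := h_nonneg
  exists_gt := by
    rintro i ⟨j, hj, hij⟩
    obtain ⟨k, hk, hjk⟩ := h_gt j hj
    exact ⟨k, subset_lowerClosure hk, hij.trans_lt hjk⟩

theorem frequently_mem_leftFilter_ofCofinal {s : Set I} (h_nonneg : ∃ i ∈ s, 0 ≤ i)
    (h_gt : ∀ i ∈ s, ∃ j ∈ s, i < j) : ∃ᶠ i in (ofCofinal s h_nonneg h_gt).leftFilter, i ∈ s := by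
  refine frequently_map.2 (frequently_atTop.2 fun ⟨i, j, hj, hij⟩ => ?_)
  exact ⟨⟨j, subset_lowerClosure hj⟩, hij, hj⟩

end LimitCut

/-- The labels of the new indices in a block: a copy of `I`, ordered so that every nonempty set of
labels has a maximum. The lift adjusts the universe of the extended index type. -/
def Label (I : Type u) : Type (max u v) := ULift.{v} I

noncomputable instance (I : Type u) : LinearOrder (Label.{u, v} I) :=
  (exists_wellFoundedGT _).choose

instance (I : Type u) : WellFoundedGT (Label.{u, v} I) :=
  (exists_wellFoundedGT _).choose_spec

/-- The extended index type: the old indices, together with a block of new indices at the end of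
every limit cut. -/
inductive ExtIndex (I : Type u) [LinearOrder I] [Zero I] : Type (max u v)
  | old (i : I) : ExtIndex I
  | new (c : LimitCut I) (k : Label.{u, v} I) : ExtIndex I

namespace ExtIndex

variable {I : Type u} [LinearOrder I] [Zero I] {i j : I} {c : LimitCut I} {k k' : Label.{u, v} I}

/-- The position of an index, from which the order is lifted. An old index `i` sits at the cut
`Iic i`; its label is arbitrary, as no new index shares that cut. -/
def position : ExtIndex.{u, v} I → LowerSet I ×ₗ Label.{u, v} I
  | old i => toLex (LowerSet.Iic i, ⟨i⟩)
  | new c k => toLex (c.toLowerSet, k)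

theorem position_injective : Function.Injective (position : ExtIndex.{u, v} I → _) := by
  rintro (i | ⟨c, k⟩) (j | ⟨c', k'⟩) h <;>
    obtain ⟨h_cut, h_label⟩ := Prod.ext_iff.1 (toLex.injective h)
  · exact congrArg old (LowerSet.Iic_injective h_cut)
  · exact absurd h_cut (c'.Iic_ne i)
  · exact absurd h_cut.symm (c.Iic_ne j)
  · exact congrArg₂ new (LimitCut.toLowerSet_injective h_cut) h_label

noncomputable instance : LinearOrder (ExtIndex.{u, v} I) :=
  LinearOrder.lift' position position_injective

instance : Zero (ExtIndex.{u, v} I) := ⟨old 0⟩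

theorem lt_iff_position_lt {p q : ExtIndex.{u, v} I} : p < q ↔ position p < position q := Iff.rfl

theorem old_lt_old : (old i : ExtIndex.{u, v} I) < old j ↔ i < j := by
  rw [lt_iff_position_lt]
  simp only [position, Prod.Lex.toLex_lt_toLex, (LowerSet.Iic_strictMono I).lt_iff_lt,
    LowerSet.Iic_inj]
  exact or_iff_left fun ⟨hij, h_label⟩ => h_label.ne (congrArg ULift.up hij)

theorem old_lt_new : old i < new c k ↔ i ∈ c.toLowerSet := by
  simp [lt_iff_position_lt, position, Prod.Lex.toLex_lt_toLex, c.Iic_ne,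
    (c.Iic_ne i).le_iff_lt.symm]

theorem new_lt_new : new c k < new c k' ↔ k < k' := by
  simp [lt_iff_position_lt, position, Prod.Lex.toLex_lt_toLex]

theorem wellFoundedOn_range_new (c : LimitCut I) :
    (Set.range (new.{u, v} c)).WellFoundedOn (· > ·) :=
  Set.wellFoundedOn_range.2 <| wellFounded_gt.mono fun _ _ => new_lt_new.1

/-- The inclusion of the old indices. -/
noncomputable def oldEmbedding (I : Type u) [LinearOrder I] [Zero I] : I ↪o ExtIndex.{u, v} I :=
  OrderEmbedding.ofStrictMono old fun _ _ => old_lt_old.2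

/-- The indices above all old indices of a cut. -/
def above (c : LimitCut I) : Set (ExtIndex.{u, v} I) :=
  {p | ∀ i ∈ c.toLowerSet, old i < p}

theorem isUpperSet_above (c : LimitCut I) : IsUpperSet (above.{u, v} c) :=
  fun _ _ hpq hp i hi => (hp i hi).trans_le hpq

theorem new_mem_above (c : LimitCut I) (k : Label.{u, v} I) : new c k ∈ above c :=
  fun _ => old_lt_new.2

end ExtIndex

open ExtIndex

section ExtArray

variable {I : Type u} {E : Type v} [LinearOrder I] [Zero I] [Bot E] {a b : I → E}

/-- The extension of an array to the new indices, which are read off the representative of its germ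
just below the cut. -/
noncomputable def extArray (a : I → E) : ExtIndex.{u, v} I → E
  | old i => a i
  | new c k => germRep c.leftFilter a k.down

theorem extArray_bot : extArray.{u, v} (fun _ : I => (⊥ : E)) = fun _ => ⊥ := by
  funext p
  cases p with
  | old i => rfl
  | new c k => exact congrFun (germRep_bot c.leftFilter) k.down

theorem extArray_wr (a : I → E) (i : I) (e : E) :
    extArray.{u, v} (wr a i e) = wr (extArray a) (old i) e := by
  funext p
  cases p with
  | old j => exact (congrFun (wr_comp_orderEmbedding (oldEmbedding I) rfl (extArray a) i e) j).symm
  | new c k =>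
    have h_germ : wr a i e =ᶠ[c.leftFilter] a :=
      c.leftFilter_le_cofinite (eventually_cofinite.2 (finite_wr_ne a i e))
    rw [wr_apply_of_ne _ (by simp)]
    exact congrFun (germRep_congr h_germ) k.down

theorem extArray_new_eq_of_forall_gt {d : I} (h : ∀ j, d < j → a j = b j) {c : LimitCut I}
    (hd : d ∈ c.toLowerSet) (k : Label.{u, v} I) : extArray a (new c k) = extArray b (new c k) :=
  congrFun (germRep_congr (LimitCut.eventuallyEq_leftFilter_of_forall_gt hd h)) k.down

theorem isDiff_extArray {d : I} (h : IsDiff d a b) :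
    IsDiff (old d : ExtIndex.{u, v} I) (extArray a) (extArray b) := by
  obtain ⟨rfl, rfl⟩ | ⟨h_ne, h_gt⟩ := h
  · exact Or.inl ⟨rfl, rfl⟩
  · refine Or.inr ⟨h_ne, fun p hp => ?_⟩
    cases p with
    | old j => exact h_gt j (old_lt_old.1 hp)
    | new c k => exact extArray_new_eq_of_forall_gt h_gt (old_lt_new.1 hp) k

theorem infinite_extArray_new_ne {c : LimitCut I} (h : ¬ a =ᶠ[c.leftFilter] b) :
    {k | extArray a (new.{u, v} c k) ≠ extArray b (new c k)}.Infinite :=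
  (infinite_germRep_ne c.leftFilter_le_cofinite h).preimage fun k _ =>
    Equiv.ulift.surjective k

theorem above_inter_ne_subset_range_new {c : LimitCut I} (hc : ∀ i, a i ≠ b i → i ∈ c.toLowerSet) :
    above.{u, v} c ∩ {p | extArray a p ≠ extArray b p} ⊆ Set.range (new c) := by
  rintro (i | ⟨c', k⟩) ⟨hp, hne⟩
  · exact absurd (hp i (hc i hne)) (lt_irrefl _)
  · have h_le : c.toLowerSet ≤ c'.toLowerSet := fun i hi => old_lt_new.1 (hp i hi)
    have h_ge : c'.toLowerSet ≤ c.toLowerSet := by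
      intro d hd
      by_contra hdc
      have h_gt : ∀ j, d < j → a j = b j := fun j hj =>
        by_contra fun h => hdc (c.toLowerSet.lower hj.le (hc j h))
      exact hne (extArray_new_eq_of_forall_gt h_gt hd k)
    exact ⟨k, by rw [LimitCut.toLowerSet_injective (h_le.antisymm h_ge)]⟩

/-- The arrays of the completion: the extensions of the arrays of `A`, modified at finitely many new
indices. -/
def extArrays (A : Set (I → E)) : Set (ExtIndex.{u, v} I → E) :=
  {x | x ∘ old ∈ A ∧ {p | x p ≠ extArray (x ∘ old) p}.Finite}

theorem extArray_mem_extArrays {A : Set (I → E)} (ha : a ∈ A) : extArray.{u, v} a ∈ extArrays A :=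
  ⟨ha, Set.finite_empty.subset fun _ hp => hp rfl⟩

theorem posSupport_of_mem_extArrays {A : Set (I → E)} (hA : ∀ a ∈ A, PosSupport a)
    {x : ExtIndex.{u, v} I → E} (hx : x ∈ extArrays A) : PosSupport x := by
  rintro (i | ⟨c, k⟩) hp
  · exact hA _ hx.1 i (old_lt_old.1 hp)
  · exact absurd (old_lt_new.2 c.zero_mem) hp.not_gt

theorem wr_mem_extArrays {A : Set (I → E)} (hA : ∀ a ∈ A, ∀ i e, wr a i e ∈ A)
    {x : ExtIndex.{u, v} I → E} (hx : x ∈ extArrays A) (p : ExtIndex.{u, v} I) (e : E) :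
    wr x p e ∈ extArrays A := by
  cases p with
  | old i =>
    have h_old : wr x (old i) e ∘ old = wr (x ∘ old) i e :=
      wr_comp_orderEmbedding (oldEmbedding I) rfl x i e
    refine ⟨h_old ▸ hA _ hx.1 i e, hx.2.subset fun q hq h => hq ?_⟩
    rw [h_old, extArray_wr]
    exact wr_apply_congr h (old i) e
  | new c k =>
    have h_old : wr x (new c k) e ∘ old = x ∘ old := funext fun i => wr_apply_of_ne x (by simp) e
    refine ⟨h_old ▸ hx.1, ((finite_wr_ne x (new c k) e).union hx.2).subset fun q hq => ?_⟩
    rw [h_old] at hq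
    by_cases hqx : wr x (new c k) e q = x q
    · exact Or.inr fun h => hq (hqx.trans h)
    · exact Or.inl hqx

theorem exists_isDiff_of_comp_old_eq {x y : ExtIndex.{u, v} I → E}
    (hx : {p | x p ≠ extArray (x ∘ old) p}.Finite) (hy : {p | y p ≠ extArray (y ∘ old) p}.Finite)
    (h : x ∘ old = y ∘ old) : ∃ d, IsDiff d x y := by
  by_cases hxy : x = y
  · exact ⟨0, Or.inl ⟨hxy, rfl⟩⟩
  · obtain ⟨p, hp⟩ := Function.ne_iff.1 hxy
    refine exists_isDiff_of_finite_ne hx hy isUpperSet_univ ⟨p, trivial, hp⟩ ?_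
    exact (Set.finite_empty.subset fun q hq => hq.2 (by rw [h])).wellFoundedOn

theorem exists_isDiff_of_isDiff_comp_old {x y : ExtIndex.{u, v} I → E}
    (hx : {p | x p ≠ extArray (x ∘ old) p}.Finite) (hy : {p | y p ≠ extArray (y ∘ old) p}.Finite)
    {d : I} (hd : IsDiff d (x ∘ old) (y ∘ old)) : ∃ d, IsDiff d x y := by
  have h_ext : IsDiff (old d) (extArray (x ∘ old)) (extArray (y ∘ old)) := isDiff_extArray hd
  obtain ⟨h, -⟩ | ⟨h_ne, -⟩ := hd
  · exact exists_isDiff_of_comp_old_eq hx hy h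
  refine exists_isDiff_of_finite_ne hx hy (isUpperSet_Ici (old d))
    ⟨old d, Set.self_mem_Ici, h_ne⟩ ?_
  refine ((Set.finite_singleton (old d)).subset fun p hp => ?_).wellFoundedOn
  obtain ⟨h_eq, -⟩ | ⟨-, h_gt⟩ := h_ext
  · exact absurd (congrFun h_eq p) hp.2
  · exact (eq_of_le_of_not_lt hp.1 fun h => hp.2 (h_gt p h)).symm

theorem exists_isDiff_of_not_eventuallyEq {x y : ExtIndex.{u, v} I → E}
    (hx : {p | x p ≠ extArray (x ∘ old) p}.Finite) (hy : {p | y p ≠ extArray (y ∘ old) p}.Finite)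
    {c : LimitCut I} (hc : ∀ i, x (old i) ≠ y (old i) → i ∈ c.toLowerSet)
    (h : ¬ x ∘ old =ᶠ[c.leftFilter] y ∘ old) : ∃ d, IsDiff d x y := by
  have h_inf : (above c ∩ {p | extArray (x ∘ old) p ≠ extArray (y ∘ old) p}).Infinite :=
    Set.infinite_of_injOn_mapsTo (fun _ _ _ _ h => (new.inj h).2)
      (fun k hk => ⟨new_mem_above c k, hk⟩) (infinite_extArray_new_ne h)
  exact exists_isDiff_of_finite_ne hx hy (isUpperSet_above c)
    (nonempty_inter_ne_of_infinite hx hy h_inf)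
    ((wellFoundedOn_range_new c).subset (above_inter_ne_subset_range_new hc))

theorem exists_isDiff_of_mem_extArrays {A : Set (I → E)} (hA : ∀ a ∈ A, PosSupport a)
    {x y : ExtIndex.{u, v} I → E} (hx : x ∈ extArrays A) (hy : y ∈ extArrays A) :
    ∃ d, IsDiff d x y := by
  by_cases h_old : ∃ d, IsDiff d (x ∘ old) (y ∘ old)
  · obtain ⟨d, hd⟩ := h_old
    exact exists_isDiff_of_isDiff_comp_old hx.2 hy.2 hd
  · let s : Set I := {i | x (old i) ≠ y (old i)}
    have h_nonneg : ∃ i ∈ s, 0 ≤ i :=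
      exists_ne_and_nonneg (hA _ hx.1) (hA _ hy.1) fun h => h_old ⟨0, Or.inl ⟨h, rfl⟩⟩
    have h_gt : ∀ i ∈ s, ∃ j ∈ s, i < j := by
      intro i hi
      by_contra! h
      exact h_old ⟨i, Or.inr ⟨hi, fun j hj => by_contra fun hne => (h j hne).not_gt hj⟩⟩
    exact exists_isDiff_of_not_eventuallyEq hx.2 hy.2 (c := .ofCofinal s h_nonneg h_gt)
      (fun i hi => subset_lowerClosure hi)
      (not_eventually.2 (LimitCut.frequently_mem_leftFilter_ofCofinal h_nonneg h_gt))

end ExtArray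

namespace FunARext

/-- The `ARD`-structure on the extended index type, with the same elements as `S`, whose arrays are
the extensions of arrays of `S` modified at finitely many new indices. -/
noncomputable def maxdiffCompletion (S : FunARext.{u, v}) : FunARD.{max u v, v} where
  I := ExtIndex.{u, v} S.I
  E := S.E
  A := extArrays S.A
  posSupport _ hx := posSupport_of_mem_extArrays S.posSupport hx
  eps_mem := extArray_bot (I := S.I) (E := S.E) ▸ extArray_mem_extArrays S.eps_mem
  wr_mem _ hx := wr_mem_extArrays S.wr_mem hx
  diff_total _ hx _ hy := exists_isDiff_of_mem_extArrays S.posSupport hx hy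

/-- The embedding of a structure in its maxdiff completion by extension of arrays. -/
noncomputable def toMaxdiffCompletion (S : FunARext.{u, v}) :
    ARextEmbedding S S.maxdiffCompletion.toFunARext where
  f := oldEmbedding S.I
  map_zero := rfl
  g := id
  g_injective := Function.injective_id
  map_bot := rfl
  h := extArray
  h_mem _ ha := extArray_mem_extArrays ha
  h_read _ _ _ := rfl
  h_eps := extArray_bot
  h_wr a _ i e := extArray_wr a i e

theorem toMaxdiffCompletion_diffFaithful (S : FunARext.{u, v}) :
    S.toMaxdiffCompletion.DiffFaithful :=
  fun _ _ _ _ _ h => isDiff_extArray h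

end FunARext

/-- every functional ARext-structure admits a diff-faithful embedding into a
functional ARD-structure. -/
theorem arext_embeds_into_ard (S : FunARext.{u, v}) :
    ∃ (S' : FunARD.{max u v, v}) (em : ARextEmbedding S S'.toFunARext),
      em.DiffFaithful :=
  ⟨S.maxdiffCompletion, S.toMaxdiffCompletion, S.toMaxdiffCompletion_diffFaithful⟩
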